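/- arXiv:math/0112309 — 2 statements merged into one kernel-verified Lean document; each statement's English description precedes it below -/
import Mathlib

section
/- The map π is multiplicative: for all Φ, Ψ ∈ S^c and every square-integrable function ξ : ℝ × [0,1) × ℤ → ℂ, (π(Φ ⋆ Ψ)ξ)(x, y, p) = (π(Φ)(π(Ψ)ξ))(x, y, p) for almost every (x, y, p). -/
/-!
Fix `(x, y)` and `p`. Both sides are iterated sums of the single family on `ℤ × ℤ`

  `Φ(x - ℏ(r - 2p)μ, …, r) Ψ(x - ℏ(s - 2(p - r))μ, …, s) ξ(x, y, p - r - s)`: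

`π(Φ)(π(Ψ)ξ)` sums over `s` and then `r`, whereas `π(Φ ⋆ Ψ)ξ` sums over `r` along the lines
`r + s = q` and then over `q`. The family is absolutely summable, so the order is immaterial, as
soon as `‖Φ‖_{∞,∞,1}` and `‖Ψ‖_{∞,∞,1}` are finite and `ξ x y` is bounded. On `S^c` the norm is
finite because `|Φ(·, ·, p)|` is `ℤ²`-periodic and so inherits the rapid decay in `p` from the unit
square; the sequence `ξ x y` is in `ℓ²(ℤ)`, hence bounded, for almost every `(x, y)`, since its
squared `ℓ²` norm has a finite iterated integral.
-/

open MeasureTheory ENNReal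

noncomputable section

/-- Membership in the space `S^c` of Rieffel's quantum Heisenberg manifold. -/
structure InSc (c : ℕ) (Φ : ℝ → ℝ → ℤ → ℂ) : Prop where
  smooth : ∀ p : ℤ, ContDiff ℝ (⊤ : ℕ∞) (fun xy : ℝ × ℝ => Φ xy.1 xy.2 p)
  periodic_y : ∀ (x y : ℝ) (p : ℤ), Φ x (y + 1) p = Φ x y p
  twisted : ∀ (k : ℤ) (x y : ℝ) (p : ℤ),
    Φ (x + k) y p = Complex.exp (2 * Real.pi * Complex.I * ((c : ℂ) * (k : ℂ) * (p : ℂ) * (y : ℂ))) * Φ x y p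
  poly_bounded : ∀ (P : Polynomial ℤ) (m n : ℕ) (K : Set (ℝ × ℝ)), IsCompact K →
    ∃ C : ℝ, ∀ (x y : ℝ) (p : ℤ), (x, y) ∈ K →
      |((P.eval p : ℤ) : ℝ)| * ‖iteratedDeriv m (fun x' => iteratedDeriv n (fun y' => Φ x' y' p) y) x‖ ≤ C

/-- The star product on `S^c`. -/
def starProd (hbar μ ν : ℝ) (Φ Ψ : ℝ → ℝ → ℤ → ℂ) : ℝ → ℝ → ℤ → ℂ :=
  fun x y p => ∑' q : ℤ,
    Φ (x - hbar * ((q - p : ℤ) : ℝ) * μ) (y - hbar * ((q - p : ℤ) : ℝ) * ν) q *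
    Ψ (x - hbar * (q : ℝ) * μ) (y - hbar * (q : ℝ) * ν) (p - q)

/-- The involution on `S^c`. -/
def invol (Φ : ℝ → ℝ → ℤ → ℂ) : ℝ → ℝ → ℤ → ℂ :=
  fun x y p => (starRingEnd ℂ) (Φ x y (-p))

/-- The norm `‖·‖_{∞,∞,1}`, valued in `ℝ≥0∞`. -/
def norm1 (Φ : ℝ → ℝ → ℤ → ℂ) : ℝ≥0∞ :=
  ∑' p : ℤ, ⨆ x : ℝ, ⨆ y : ℝ, (‖Φ x y p‖₊ : ℝ≥0∞)

/-- The representation `π` acting on functions on `ℝ × [0,1) × ℤ`. -/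
def piRep (hbar μ ν : ℝ) (Φ ξ : ℝ → ℝ → ℤ → ℂ) : ℝ → ℝ → ℤ → ℂ :=
  fun x y p => ∑' q : ℤ,
    Φ (x - hbar * ((q - 2 * p : ℤ) : ℝ) * μ) (y - hbar * ((q - 2 * p : ℤ) : ℝ) * ν) q *
    ξ x y (p - q)

/-- Square integrability (with measurability) on `ℝ × [0,1) × ℤ`. -/
def SqInt (ξ : ℝ → ℝ → ℤ → ℂ) : Prop :=
  (∀ p : ℤ, Measurable (fun xy : ℝ × ℝ => ξ xy.1 xy.2 p)) ∧
  (∫⁻ x : ℝ, ∫⁻ y in Set.Ico (0:ℝ) 1, ∑' p : ℤ, ((‖ξ x y p‖₊ : ℝ≥0∞)) ^ 2) < ⊤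

/-- The `L²` norm on `ℝ × [0,1) × ℤ`, valued in `ℝ≥0∞`. -/
def l2norm (ξ : ℝ → ℝ → ℤ → ℂ) : ℝ≥0∞ :=
  (∫⁻ x : ℝ, ∫⁻ y in Set.Ico (0:ℝ) 1, ∑' p : ℤ, ((‖ξ x y p‖₊ : ℝ≥0∞)) ^ 2) ^ (1/2 : ℝ)

/-- The inner product on `L²(ℝ × [0,1) × ℤ)`. -/
def ip (ξ η : ℝ → ℝ → ℤ → ℂ) : ℂ :=
  ∫ x : ℝ, ∫ y in Set.Ico (0:ℝ) 1, ∑' p : ℤ, ξ x y p * (starRingEnd ℂ) (η x y p)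

/-- The action of the Heisenberg group. -/
def Lact (c : ℕ) (r s t : ℝ) (Φ : ℝ → ℝ → ℤ → ℂ) : ℝ → ℝ → ℤ → ℂ :=
  fun x y p => Complex.exp (2 * Real.pi * Complex.I *
    ((p : ℂ) * ((t : ℂ) + (c : ℂ) * (s : ℂ) * ((x : ℂ) - (r : ℂ))))) * Φ (x - r) (y - s) p

/-- The trace `τ`. -/
def tr (Φ : ℝ → ℝ → ℤ → ℂ) : ℂ :=
  ∫ x in (0:ℝ)..1, ∫ y in (0:ℝ)..1, Φ x y 0

/-- The zero mode `Φ⁽⁰⁾`. -/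
def zeroMode (Φ : ℝ → ℝ → ℤ → ℂ) : ℝ → ℝ → ℤ → ℂ :=
  fun x y p => if p = 0 then Φ x y 0 else 0

/-- The derivation `δ₁`. -/
def d1 (Φ : ℝ → ℝ → ℤ → ℂ) : ℝ → ℝ → ℤ → ℂ :=
  fun x y p => -(deriv (fun x' => Φ x' y p) x)

/-- The derivation `δ₂`. -/
def d2 (c : ℕ) (Φ : ℝ → ℝ → ℤ → ℂ) : ℝ → ℝ → ℤ → ℂ :=
  fun x y p => 2 * Real.pi * Complex.I * (c : ℂ) * (p : ℂ) * (x : ℂ) * Φ x y p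
    - deriv (fun y' => Φ x y' p) y

/-- The derivation `δ₃`. -/
def d3 (Φ : ℝ → ℝ → ℤ → ℂ) : ℝ → ℝ → ℤ → ℂ :=
  fun x y p => 2 * Real.pi * Complex.I * (p : ℂ) * Φ x y p

lemma summable_inv_one_add_int_sq : Summable fun p : ℤ => (1 + (p : ℝ) ^ 2)⁻¹ := by
  refine (Real.summable_one_div_int_pow.mpr one_lt_two).of_norm_bounded_eventually ?_
  -- `p = 0` is excluded because `1 / 0 = 0` in `ℝ`.
  filter_upwards [(Set.finite_singleton (0 : ℤ)).compl_mem_cofinite] with p hp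
  have hp_pos : (0 : ℝ) < (p : ℝ) ^ 2 := by
    have : (p : ℝ) ≠ 0 := Int.cast_ne_zero.mpr hp
    positivity
  rw [Real.norm_of_nonneg (by positivity), one_div]
  exact inv_anti₀ hp_pos (by linarith)

lemma tsum_tsum_sub {G E : Type*} [AddGroup G] [AddCommGroup E] [UniformSpace E]
    [IsUniformAddGroup E] [CompleteSpace E] [T0Space E] {F : G → G → E}
    (hF : Summable (Function.uncurry F)) :
    ∑' q, ∑' r, F r (q - r) = ∑' r, ∑' s, F r s := by
  have hshear : Summable (Function.uncurry fun r q => F r (q - r)) :=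
    (Equiv.prodShear (Equiv.refl G) Equiv.subRight).summable_iff.mpr hF
  rw [hshear.tsum_comm]
  exact tsum_congr fun r => (Equiv.subRight r).tsum_eq (F r)

lemma ae_ae_lt_top_of_lintegral_lintegral_ne_top {α β : Type*} [MeasurableSpace α]
    [MeasurableSpace β] {κ : Measure α} {ρ : Measure β} [SFinite ρ] {f : α × β → ℝ≥0∞}
    (hf : Measurable f) (hfin : ∫⁻ a, ∫⁻ b, f (a, b) ∂ρ ∂κ ≠ ⊤) :
    ∀ᵐ a ∂κ, ∀ᵐ b ∂ρ, f (a, b) < ⊤ := by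
  filter_upwards [ae_lt_top hf.lintegral_prod_right' hfin] with a ha
  exact ae_lt_top (hf.comp measurable_prodMk_left) ha.ne

lemma memℓp_two_of_tsum_nnnorm_sq_ne_top {ι E : Type*} [NormedAddCommGroup E] {f : ι → E}
    (hf : ∑' i, (‖f i‖₊ : ℝ≥0∞) ^ 2 ≠ ⊤) : Memℓp f 2 := by
  refine memℓp_gen ?_
  simpa using ENNReal.summable_toReal hf

lemma SqInt.ae_memℓp_two {ξ : ℝ → ℝ → ℤ → ℂ} (hξ : SqInt ξ) :
    ∀ᵐ x : ℝ, ∀ᵐ y ∂(volume.restrict (Set.Ico (0 : ℝ) 1)), Memℓp (ξ x y) 2 := by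
  obtain ⟨hmeas, hfin⟩ := hξ
  have hmeas_sum : Measurable fun xy : ℝ × ℝ => ∑' p : ℤ, (‖ξ xy.1 xy.2 p‖₊ : ℝ≥0∞) ^ 2 :=
    .tsum fun p => (hmeas p).nnnorm.coe_nnreal_ennreal.pow_const 2
  filter_upwards [ae_ae_lt_top_of_lintegral_lintegral_ne_top hmeas_sum hfin.ne] with x hx
  filter_upwards [hx] with y hy using memℓp_two_of_tsum_nnnorm_sq_ne_top hy.ne

lemma norm1_ne_top_iff {Φ : ℝ → ℝ → ℤ → ℂ} :
    norm1 Φ ≠ ⊤ ↔ ∃ u : ℤ → ℝ, Summable u ∧ ∀ x y p, ‖Φ x y p‖ ≤ u p := by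
  constructor
  · intro h
    refine ⟨_, ENNReal.summable_toReal h, fun x y p => ?_⟩
    refine (ENNReal.ofReal_le_iff_le_toReal (ENNReal.ne_top_of_tsum_ne_top h p)).mp ?_
    rw [ofReal_norm]
    exact le_iSup₂ (f := fun x y => (‖Φ x y p‖₊ : ℝ≥0∞)) x y
  · rintro ⟨u, hu, hΦu⟩
    refine ne_top_of_le_ne_top hu.tsum_ofReal_ne_top (ENNReal.tsum_le_tsum fun p => ?_)
    refine iSup₂_le fun x y => ?_
    rw [← enorm_eq_nnnorm, ← ofReal_norm]
    exact ENNReal.ofReal_le_ofReal (hΦu x y p)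

namespace InSc

variable {c : ℕ} {Φ : ℝ → ℝ → ℤ → ℂ}

lemma norm_fract_fract (hΦ : InSc c Φ) (x y : ℝ) (p : ℤ) :
    ‖Φ (Int.fract x) (Int.fract y) p‖ = ‖Φ x y p‖ := by
  have norm_x (y : ℝ) : ‖Φ (Int.fract x) y p‖ = ‖Φ x y p‖ := by
    have htwist := hΦ.twisted ⌊x⌋ (Int.fract x) y p
    rw [Int.fract_add_floor] at htwist
    rw [htwist, norm_mul, Complex.norm_exp]
    simp
  have hperiodic : Function.Periodic (fun y => Φ x y p) 1 := fun y => hΦ.periodic_y x y p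
  rw [norm_x, Int.fract, ← mul_one (⌊y⌋ : ℝ)]
  exact congrArg norm (hperiodic.sub_int_mul_eq ⌊y⌋)

lemma exists_abs_eval_mul_norm_le (hΦ : InSc c Φ) (P : Polynomial ℤ) :
    ∃ C : ℝ, ∀ x y p, |((P.eval p : ℤ) : ℝ)| * ‖Φ x y p‖ ≤ C := by
  obtain ⟨C, hC⟩ := hΦ.poly_bounded P 0 0 (Set.Icc 0 1 ×ˢ Set.Icc 0 1)
    (isCompact_Icc.prod isCompact_Icc)
  refine ⟨C, fun x y p => ?_⟩
  have hmem (t : ℝ) : Int.fract t ∈ Set.Icc (0 : ℝ) 1 :=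
    ⟨Int.fract_nonneg t, (Int.fract_lt_one t).le⟩
  have hbound := hC (Int.fract x) (Int.fract y) p ⟨hmem x, hmem y⟩
  simpa only [iteratedDeriv_zero, hΦ.norm_fract_fract] using hbound

lemma norm1_ne_top (hΦ : InSc c Φ) : norm1 Φ ≠ ⊤ := by
  obtain ⟨C, hC⟩ := hΦ.exists_abs_eval_mul_norm_le (1 + Polynomial.X ^ 2)
  refine norm1_ne_top_iff.mpr ⟨_, summable_inv_one_add_int_sq.mul_left C, fun x y p => ?_⟩
  have hpos : 0 < 1 + (p : ℝ) ^ 2 := by positivity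
  have heval : |(((1 + Polynomial.X ^ 2 : Polynomial ℤ).eval p : ℤ) : ℝ)| = 1 + (p : ℝ) ^ 2 := by
    simpa using abs_of_pos hpos
  rw [← div_eq_mul_inv, le_div_iff₀' hpos, ← heval]
  exact hC x y p

end InSc

section Composition

variable (hbar μ ν : ℝ) (Φ Ψ ξ : ℝ → ℝ → ℤ → ℂ) (x y : ℝ) (p : ℤ)

/-- The `(r, s)` term of the double series obtained by expanding `(π(Φ)(π(Ψ)ξ))(x, y, p)`, where `r`
is the third argument of `Φ` and `s` that of `Ψ`. -/
def compSummand (r s : ℤ) : ℂ :=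
  Φ (x - hbar * ((r - 2 * p : ℤ) : ℝ) * μ) (y - hbar * ((r - 2 * p : ℤ) : ℝ) * ν) r *
    (Ψ (x - hbar * ((s - 2 * (p - r) : ℤ) : ℝ) * μ)
      (y - hbar * ((s - 2 * (p - r) : ℤ) : ℝ) * ν) s * ξ x y (p - r - s))

lemma piRep_piRep_eq_tsum :
    piRep hbar μ ν Φ (piRep hbar μ ν Ψ ξ) x y p =
      ∑' r, ∑' s, compSummand hbar μ ν Φ Ψ ξ x y p r s :=
  tsum_congr fun _ => tsum_mul_left.symm

lemma piRep_starProd_eq_tsum :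
    piRep hbar μ ν (starProd hbar μ ν Φ Ψ) ξ x y p =
      ∑' q, ∑' r, compSummand hbar μ ν Φ Ψ ξ x y p r (q - r) := by
  refine tsum_congr fun q => ?_
  rw [starProd, ← tsum_mul_right]
  refine tsum_congr fun r => ?_
  have add_shifts (t θ : ℝ) (m n : ℤ) :
      t - hbar * (m : ℝ) * θ - hbar * (n : ℝ) * θ = t - hbar * ((m + n : ℤ) : ℝ) * θ := by
    push_cast
    ring
  have hΦ_shift : q - 2 * p + (r - q) = r - 2 * p := by ring
  have hΨ_shift : q - 2 * p + r = q - r - 2 * (p - r) := by ring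
  have hξ_index : p - q = p - r - (q - r) := by ring
  rw [compSummand, mul_assoc]
  simp only [add_shifts, hΦ_shift, hΨ_shift, hξ_index]

variable {Φ Ψ ξ x y}

lemma summable_compSummand (hΦ : norm1 Φ ≠ ⊤) (hΨ : norm1 Ψ ≠ ⊤) (hξ : Memℓp (ξ x y) ∞) :
    Summable (Function.uncurry (compSummand hbar μ ν Φ Ψ ξ x y p)) := by
  obtain ⟨u, hu, hΦu⟩ := norm1_ne_top_iff.mp hΦ
  obtain ⟨v, hv, hΨv⟩ := norm1_ne_top_iff.mp hΨ
  obtain ⟨M, hM⟩ := memℓp_infty_iff.mp hξ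
  have hξM (n : ℤ) : ‖ξ x y n‖ ≤ M := hM (Set.mem_range_self n)
  have hu_nonneg : 0 ≤ u := fun r => (norm_nonneg _).trans (hΦu 0 0 r)
  have hv_nonneg : 0 ≤ v := fun s => (norm_nonneg _).trans (hΨv 0 0 s)
  refine .of_norm_bounded (hu.mul_of_nonneg (hv.mul_right M) hu_nonneg fun s => ?_) ?_
  · exact mul_nonneg (hv_nonneg s) ((norm_nonneg _).trans (hξM 0))
  · rintro ⟨r, s⟩
    simp only [Function.uncurry_apply_pair, compSummand, norm_mul]
    gcongr
    exacts [hu_nonneg r, hΦu _ _ r, hv_nonneg s, hΨv _ _ s, hξM _]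

theorem piRep_mul_general (hΦ : norm1 Φ ≠ ⊤) (hΨ : norm1 Ψ ≠ ⊤) (hξ : Memℓp (ξ x y) ∞) :
    piRep hbar μ ν (starProd hbar μ ν Φ Ψ) ξ x y p =
      piRep hbar μ ν Φ (piRep hbar μ ν Ψ ξ) x y p := by
  rw [piRep_starProd_eq_tsum, piRep_piRep_eq_tsum,
    tsum_tsum_sub (summable_compSummand hbar μ ν p hΦ hΨ hξ)]

end Composition

theorem piRep_mul (c : ℕ) (hc : 0 < c) (hbar μ ν : ℝ) (hμν : μ ^ 2 + ν ^ 2 ≠ 0)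
    (Φ Ψ : ℝ → ℝ → ℤ → ℂ) (hΦ : InSc c Φ) (hΨ : InSc c Ψ)
    (ξ : ℝ → ℝ → ℤ → ℂ) (hξ : SqInt ξ) :
    ∀ᵐ x : ℝ ∂volume, ∀ᵐ y ∂(volume.restrict (Set.Ico (0:ℝ) 1)), ∀ p : ℤ,
      piRep hbar μ ν (starProd hbar μ ν Φ Ψ) ξ x y p =
      piRep hbar μ ν Φ (piRep hbar μ ν Ψ ξ) x y p := by
  filter_upwards [hξ.ae_memℓp_two] with x hx
  filter_upwards [hx] with y hy p using
    piRep_mul_general hbar μ ν p hΦ.norm1_ne_top hΨ.norm1_ne_top (hy.of_exponent_ge le_top)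

end
end

section
/- For every (r, s, t) ∈ ℝ³, the map L_{(r,s,t)} is multiplicative for the star product: for all Φ, Ψ ∈ S^c, L_{(r,s,t)}(Φ ⋆ Ψ) = (L_{(r,s,t)}Φ) ⋆ (L_{(r,s,t)}Ψ) as functions on ℝ × ℝ × ℤ. -/
/-!
The identity holds term by term in the sum over `q`: translating by `(r, s)` commutes with the
shifts in the star product, and the phases `e(q(t + cs(x - ℏ(q-p)μ - r)))` and
`e((p-q)(t + cs(x - ℏqμ - r)))` multiply to `e(p(t + cs(x - r)))`, since the `ℏμ` contributions
cancel. The sum converges because `|Φ|` is periodic in both real variables, so that its decay in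
`p`, uniform on the unit square, is uniform on the whole plane.
-/

open MeasureTheory ENNReal

noncomputable section

/-- The phase `e(p(t + cs(x - r)))` by which the Heisenberg group element `(r, s, t)` multiplies the
`p`-th mode at `x`, with `e` encoded as `Real.fourierChar`. -/
def heisenbergPhase (c : ℕ) (r s t x : ℝ) (p : ℤ) : Circle :=
  Real.fourierChar (p * (t + c * s * (x - r)))

/-- The `q`-th summand of the star product `Φ ⋆ Ψ` at `(x, y, p)`, named so that convergence of the
star product can be expressed. -/
def starTerm (hbar μ ν : ℝ) (Φ Ψ : ℝ → ℝ → ℤ → ℂ) (x y : ℝ) (p q : ℤ) : ℂ :=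
  Φ (x - hbar * ((q - p : ℤ) : ℝ) * μ) (y - hbar * ((q - p : ℤ) : ℝ) * ν) q *
    Ψ (x - hbar * (q : ℝ) * μ) (y - hbar * (q : ℝ) * ν) (p - q)

theorem starProd_eq_tsum (hbar μ ν : ℝ) (Φ Ψ : ℝ → ℝ → ℤ → ℂ) (x y : ℝ) (p : ℤ) :
    starProd hbar μ ν Φ Ψ x y p = ∑' q, starTerm hbar μ ν Φ Ψ x y p q :=
  rfl

theorem Lact_eq_heisenbergPhase_mul (c : ℕ) (r s t : ℝ) (Φ : ℝ → ℝ → ℤ → ℂ) (x y : ℝ) (p : ℤ) :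
    Lact c r s t Φ x y p = heisenbergPhase c r s t x p * Φ (x - r) (y - s) p := by
  rw [Lact, heisenbergPhase, Real.fourierChar_apply]
  push_cast
  ring_nf

theorem heisenbergPhase_mul_of_shift (c : ℕ) (r s t x hbar μ : ℝ) (p q : ℤ) :
    heisenbergPhase c r s t (x - hbar * ((q - p : ℤ) : ℝ) * μ) q *
        heisenbergPhase c r s t (x - hbar * (q : ℝ) * μ) (p - q) =
      heisenbergPhase c r s t x p := by
  simp only [heisenbergPhase, ← AddChar.map_add_eq_mul]
  push_cast
  ring_nf

theorem starTerm_Lact (c : ℕ) (hbar μ ν r s t : ℝ) (Φ Ψ : ℝ → ℝ → ℤ → ℂ) (x y : ℝ) (p q : ℤ) :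
    starTerm hbar μ ν (Lact c r s t Φ) (Lact c r s t Ψ) x y p q =
      heisenbergPhase c r s t x p * starTerm hbar μ ν Φ Ψ (x - r) (y - s) p q := by
  simp only [starTerm, Lact_eq_heisenbergPhase_mul, sub_right_comm _ _ r, sub_right_comm _ _ s]
  rw [← heisenbergPhase_mul_of_shift c r s t x hbar μ p q, Circle.coe_mul]
  ring

namespace InSc

variable {c : ℕ} {Φ Ψ : ℝ → ℝ → ℤ → ℂ}

theorem periodic_norm_left (hΦ : InSc c Φ) (y : ℝ) (p : ℤ) :
    Function.Periodic (fun x => ‖Φ x y p‖) 1 := fun x => by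
  have phase_norm : ‖Complex.exp (2 * Real.pi * Complex.I *
      ((c : ℂ) * ((1 : ℤ) : ℂ) * (p : ℂ) * (y : ℂ)))‖ = 1 := by
    simp [Complex.norm_exp]
  have twist := congrArg norm (hΦ.twisted 1 x y p)
  rwa [norm_mul, phase_norm, one_mul, Int.cast_one] at twist

theorem periodic_norm_right (hΦ : InSc c Φ) (x : ℝ) (p : ℤ) :
    Function.Periodic (fun y => ‖Φ x y p‖) 1 := fun y =>
  congrArg norm (hΦ.periodic_y x y p)

theorem exists_eval_mul_norm_le (hΦ : InSc c Φ) (P : Polynomial ℤ) :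
    ∃ C : ℝ, ∀ (x y : ℝ) (p : ℤ), |((P.eval p : ℤ) : ℝ)| * ‖Φ x y p‖ ≤ C := by
  obtain ⟨C, hC⟩ := hΦ.poly_bounded P 0 0 (Set.Icc 0 1 ×ˢ Set.Icc 0 1)
    (isCompact_Icc.prod isCompact_Icc)
  refine ⟨C, fun x y p => ?_⟩
  obtain ⟨x₀, hx₀, hx⟩ := (hΦ.periodic_norm_left y p).exists_mem_Ico₀ one_pos x
  obtain ⟨y₀, hy₀, hy⟩ := (hΦ.periodic_norm_right x₀ p).exists_mem_Ico₀ one_pos y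
  rw [hx, hy]
  simpa only [iteratedDeriv_zero] using
    hC x₀ y₀ p ⟨Set.Ico_subset_Icc_self hx₀, Set.Ico_subset_Icc_self hy₀⟩

theorem exists_norm_le (hΦ : InSc c Φ) : ∃ C : ℝ, ∀ (x y : ℝ) (p : ℤ), ‖Φ x y p‖ ≤ C := by
  simpa using hΦ.exists_eval_mul_norm_le 1

theorem exists_norm_le_div_sq (hΦ : InSc c Φ) :
    ∃ C : ℝ, ∀ (x y : ℝ) (p : ℤ), p ≠ 0 → ‖Φ x y p‖ ≤ C * (1 / (p : ℝ) ^ 2) := by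
  obtain ⟨C, hC⟩ := hΦ.exists_eval_mul_norm_le (Polynomial.X ^ 2)
  refine ⟨C, fun x y p hp => ?_⟩
  rw [mul_one_div, le_div_iff₀' (by positivity)]
  simpa using hC x y p

theorem summable_starTerm {d : ℕ} (hΦ : InSc c Φ) (hΨ : InSc d Ψ) (hbar μ ν x y : ℝ) (p : ℤ) :
    Summable (starTerm hbar μ ν Φ Ψ x y p) := by
  obtain ⟨C, hC⟩ := hΦ.exists_norm_le_div_sq
  obtain ⟨D, hD⟩ := hΨ.exists_norm_le
  have inv_sq_summable : Summable fun q : ℤ => C * (1 / (q : ℝ) ^ 2) * D :=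
    ((Real.summable_one_div_int_pow.mpr one_lt_two).mul_left C).mul_right D
  refine inv_sq_summable.of_norm_bounded_eventually ?_
  filter_upwards [(Set.finite_singleton (0 : ℤ)).compl_mem_cofinite] with q hq
  have hΦq := hC (x - hbar * ((q - p : ℤ) : ℝ) * μ) (y - hbar * ((q - p : ℤ) : ℝ) * ν) q hq
  rw [starTerm, norm_mul]
  exact mul_le_mul hΦq (hD _ _ _) (norm_nonneg _) ((norm_nonneg _).trans hΦq)

end InSc

theorem Lact_mul_general (c : ℕ) (hbar μ ν r s t : ℝ) (Φ Ψ : ℝ → ℝ → ℤ → ℂ) (x y : ℝ) (p : ℤ)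
    (hsum : Summable (starTerm hbar μ ν Φ Ψ (x - r) (y - s) p)) :
    HasSum (starTerm hbar μ ν (Lact c r s t Φ) (Lact c r s t Ψ) x y p)
      (Lact c r s t (starProd hbar μ ν Φ Ψ) x y p) := by
  rw [Lact_eq_heisenbergPhase_mul, starProd_eq_tsum,
    funext (starTerm_Lact c hbar μ ν r s t Φ Ψ x y p)]
  exact hsum.hasSum.mul_left _

theorem Lact_mul (c : ℕ) (hc : 0 < c) (hbar μ ν : ℝ) (hμν : μ ^ 2 + ν ^ 2 ≠ 0) (r s t : ℝ)
    (Φ Ψ : ℝ → ℝ → ℤ → ℂ) (hΦ : InSc c Φ) (hΨ : InSc c Ψ) :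
    ∀ (x y : ℝ) (p : ℤ),
      Lact c r s t (starProd hbar μ ν Φ Ψ) x y p =
      starProd hbar μ ν (Lact c r s t Φ) (Lact c r s t Ψ) x y p :=
  fun x y p => (Lact_mul_general c hbar μ ν r s t Φ Ψ x y p
    (hΦ.summable_starTerm hΨ hbar μ ν (x - r) (y - s) p)).tsum_eq.symm

end
end
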